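/- Let A be a subgroup of (ℤ/nℤ)^×, let r ∈ ℤ/nℤ satisfy gcd(r, n) = n/d for some positive divisor d of n, and let ψ_d : ℤ/nℤ → ℤ/dℤ be the natural ring homomorphism. Then the image of σ_{Ar} (on ℤ/nℤ), the image of σ_{A·(n/d)} (on ℤ/nℤ), and the image of σ_{ψ_d(A)·1} (on ℤ/dℤ) are all equal as subsets of ℂ. -/

import Mathlib

open Complex

/-- `e(θ) = exp(2πiθ)`. -/
noncomputable def e2 (θ : ℝ) : ℂ := Complex.exp (2 * Real.pi * Complex.I * θ)

/-- The cyclic supercharacter attached to a subset `X` of `ℤ/nℤ`: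
`σ_X(y) = Σ_{x ∈ X} e(xy/n)`. -/
noncomputable def superchar (n : ℕ) (X : Set (ZMod n)) (y : ZMod n) : ℂ :=
  ∑ᶠ x ∈ X, e2 (((x.val * y.val : ℕ) : ℝ) / (n : ℝ))

/-- The orbit `Ar = {ar : a ∈ A}` of `r` under a unit subgroup `A`. -/
def unitOrbit (n : ℕ) (A : Subgroup (ZMod n)ˣ) (r : ZMod n) : Set (ZMod n) :=
  (fun a : (ZMod n)ˣ => (a : ZMod n) * r) '' (A : Set (ZMod n)ˣ)


lemma e2_eq_std (n : ℕ) [NeZero n] (x y : ZMod n) :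
    e2 (((x.val * y.val : ℕ) : ℝ) / (n : ℝ)) = ZMod.stdAddChar (x * y) := by
  have h : x * y = (((x.val * y.val : ℕ) : ℤ) : ZMod n) := by simp
  rw [h, ZMod.stdAddChar_coe, e2]
  congr 1
  push_cast
  ring

lemma std_descend (d m : ℕ) [NeZero d] [NeZero m] [NeZero (d * m)] (a : ℤ) :
    (ZMod.stdAddChar ((m * a : ℤ) : ZMod (d * m)) : ℂ) = ZMod.stdAddChar (a : ZMod d) := by
  rw [ZMod.stdAddChar_coe, ZMod.stdAddChar_coe]
  congr 1
  have hm : (m : ℂ) ≠ 0 := by exact_mod_cast NeZero.ne m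
  have hd : (d : ℂ) ≠ 0 := by exact_mod_cast NeZero.ne d
  push_cast
  field_simp

lemma mul_cast_eq_iff (d m : ℕ) [NeZero m] (a b : ℤ) :
    ((m * a : ℤ) : ZMod (d * m)) = ((m * b : ℤ) : ZMod (d * m)) ↔
      (a : ZMod d) = (b : ZMod d) := by
  rw [ZMod.intCast_eq_intCast_iff_dvd_sub, ZMod.intCast_eq_intCast_iff_dvd_sub, ← mul_sub]
  push_cast
  rw [mul_comm (d : ℤ)]
  exact mul_dvd_mul_iff_left (by exact_mod_cast NeZero.ne m)

lemma key (d m k : ℕ) [NeZero d] [NeZero m] [NeZero (d * m)] (hk : Nat.Coprime k d)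
    (hdvd : d ∣ d * m) (A : Subgroup (ZMod (d * m))ˣ) (r : ZMod (d * m))
    (hr : r = ((m * k : ℤ) : ZMod (d * m))) (y : ZMod (d * m)) :
    superchar (d * m) (unitOrbit (d * m) A r) y =
      superchar d (unitOrbit d
        (A.map (Units.map (ZMod.castHom hdvd (ZMod d)).toMonoidHom)) 1)
        ((k : ZMod d) * ZMod.castHom hdvd (ZMod d) y) := by
  have hku : IsUnit (k : ZMod d) := (ZMod.isUnit_iff_coprime k d).2 hk
  set g : ZMod d → ZMod (d * m) := fun x => ((m * (k * (x.val : ℤ)) : ℤ) : ZMod (d * m)) with hg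
  have hinj : Function.Injective g := by
    intro a b hab
    have := (mul_cast_eq_iff d m _ _).1 hab
    push_cast at this
    simpa using hku.mul_left_cancel this
  have himg : unitOrbit (d * m) A r = g '' (unitOrbit d
        (A.map (Units.map (ZMod.castHom hdvd (ZMod d)).toMonoidHom)) 1) := by
    have hpt : ∀ a : ZMod (d * m), g (ZMod.castHom hdvd (ZMod d) a) = a * r := by
      intro a
      have h1 : a * r = ((m * (k * (a.val : ℤ)) : ℤ) : ZMod (d * m)) := by
        rw [hr]; push_cast; rw [ZMod.natCast_zmod_val a]; ring
      rw [h1, hg]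
      refine (mul_cast_eq_iff d m _ _).2 ?_
      push_cast
      rw [ZMod.natCast_zmod_val]
      congr 1
      rw [ZMod.castHom_apply, ZMod.natCast_val]
    ext z
    simp only [unitOrbit, Set.mem_image, SetLike.mem_coe, Subgroup.mem_map]
    constructor
    · rintro ⟨a, ha, rfl⟩
      exact ⟨_, ⟨_, ⟨a, ha, rfl⟩, rfl⟩, by rw [mul_one]; exact hpt a⟩
    · rintro ⟨_, ⟨_, ⟨a, ha, rfl⟩, rfl⟩, rfl⟩
      exact ⟨a, ha, by rw [mul_one]; exact (hpt a).symm⟩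
  unfold superchar
  rw [himg, finsum_mem_image hinj.injOn]
  refine finsum_congr fun x => finsum_congr fun _ => ?_
  rw [e2_eq_std, e2_eq_std]
  have h1 : g x * y = ((m * (k * (x.val : ℤ) * y.val) : ℤ) : ZMod (d * m)) := by
    rw [hg]; push_cast; rw [ZMod.natCast_zmod_val y]; ring
  rw [h1, std_descend]
  congr 1
  push_cast
  rw [ZMod.natCast_zmod_val x, ZMod.castHom_apply, ZMod.natCast_val]
  ring

lemma range_eq (n d : ℕ) (hn : 0 < n) (hd : 0 < d) (hdvd : d ∣ n)
    (A : Subgroup (ZMod n)ˣ) (r : ZMod n)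
    (hr : Nat.gcd r.val n = n / d) :
    Set.range (superchar n (unitOrbit n A r))
      = Set.range (superchar d (unitOrbit d
          (A.map (Units.map (ZMod.castHom hdvd (ZMod d)).toMonoidHom)) 1)) := by
  obtain ⟨m, rfl⟩ := id hdvd
  have hm : 0 < m := Nat.pos_of_mul_pos_left hn
  haveI : NeZero d := ⟨hd.ne'⟩
  haveI : NeZero m := ⟨hm.ne'⟩
  haveI : NeZero (d * m) := ⟨hn.ne'⟩
  rw [Nat.mul_div_cancel_left m hd] at hr
  obtain ⟨k, hk⟩ : m ∣ r.val := by
    have := Nat.gcd_dvd_left r.val (d * m)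
    rwa [hr] at this
  have hc : Nat.Coprime k d := by
    rw [hk, mul_comm d m, Nat.gcd_mul_left] at hr
    exact Nat.eq_of_mul_eq_mul_left hm (by rw [hr, mul_one])
  have hr' : r = ((m * k : ℤ) : ZMod (d * m)) := by
    rw [← ZMod.natCast_zmod_val r, hk]; push_cast; rfl
  obtain ⟨u, hu⟩ := (ZMod.isUnit_iff_coprime k d).2 hc
  have hkey := key d m k hc hdvd A r hr'
  ext z
  constructor
  · rintro ⟨y, rfl⟩
    exact ⟨_, (hkey y).symm⟩
  · rintro ⟨w, rfl⟩
    obtain ⟨y, hy⟩ := ZMod.castHom_surjective hdvd (↑u⁻¹ * w)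
    refine ⟨y, ?_⟩
    rw [hkey y, hy, ← hu, Units.mul_inv_cancel_left]

theorem stmt2 (n d : ℕ) (hn : 0 < n) (hd : 0 < d) (hdvd : d ∣ n)
    (A : Subgroup (ZMod n)ˣ) (r : ZMod n)
    (hr : Nat.gcd r.val n = n / d) :
    Set.range (superchar n (unitOrbit n A r))
      = Set.range (superchar n (unitOrbit n A ((n / d : ℕ) : ZMod n)))
    ∧ Set.range (superchar n (unitOrbit n A r))
      = Set.range (superchar d (unitOrbit d
          (A.map (Units.map (ZMod.castHom hdvd (ZMod d)).toMonoidHom)) 1)) := by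
  have h1 := range_eq n d hn hd hdvd A r hr
  refine ⟨h1.trans (range_eq n d hn hd hdvd A _ ?_).symm, h1⟩
  rw [ZMod.val_natCast, ← Nat.gcd_rec, Nat.gcd_comm]
  first
    | exact Nat.gcd_eq_left (Nat.div_dvd_of_dvd hdvd)
    | exact Nat.gcd_eq_right (Nat.div_dvd_of_dvd hdvd)
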